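/- There exist an integer k ≥ 3 and a constant D < ∞ such that for every n ∈ ℕ there is a finite connected k-regular simple graph G with girth(G) ≥ n and c₁(G) ≤ D. (In other words, there is a sequence of k-regular graphs with indefinitely growing girths and uniformly bounded ℓ₁ distortions.) -/

import Mathlib

open SimpleGraph

noncomputable section
attribute [local instance] Classical.propDecidable

/-- The `ℓ₁`-distortion `c₁(G)` of a graph `G`, with vertices carrying the shortest path
metric: the infimum of all `C` for which there is a `C`-bilipschitz embedding
`φ : V(G) → ℓ₁`, i.e. some `r > 0` with
`r·d(u,v) ≤ ‖φ u - φ v‖₁ ≤ r·C·d(u,v)` for all vertices `u, v`. -/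
def l1Distortion {W : Type*} (G : SimpleGraph W) : ℝ :=
  sInf {C : ℝ | ∃ (φ : W → lp (fun _ : ℕ => ℝ) 1) (r : ℝ), 0 < r ∧
    ∀ u v : W, r * G.dist u v ≤ ‖φ u - φ v‖ ∧ ‖φ u - φ v‖ ≤ r * C * G.dist u v}


namespace GirthL1

open Walk

/-- A closed-up non-backtracking walk that is not a path contains a cycle. -/
lemma nb_cycle {V : Type*} {G : SimpleGraph V} {a b : V} (p : G.Walk a b)
    (h : List.IsChain (· ≠ ·) p.edges) (hp : ¬ p.IsPath) :
    ∃ (x : V) (c : G.Walk x x), c.IsCycle ∧ List.Sublist c.edges p.edges := by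
  induction p with
  | nil => simp at hp
  | @cons u v w hadj q ih =>
    rw [Walk.edges_cons] at h
    by_cases hq : q.IsPath
    · have hu : u ∈ q.support := by
        by_contra hu
        exact hp ((Walk.cons_isPath_iff _ _).2 ⟨hq, hu⟩)
      refine ⟨u, Walk.cons hadj (q.takeUntil u hu), ?_, ?_⟩
      · refine (Walk.cons_isCycle_iff _ _).2 ⟨hq.takeUntil hu, fun he => ?_⟩
        cases q with
        | nil => simpa using Walk.edges_takeUntil_subset_edges _ hu he
        | @cons _ z _ hvz q' =>
          have hne : s(u, v) ≠ s(v, z) := by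
            rw [Walk.edges_cons] at h
            exact (List.isChain_cons_cons.1 h).1
          have he' := Walk.edges_takeUntil_subset_edges _ hu he
          rw [Walk.edges_cons, List.mem_cons] at he'
          rcases he' with he' | he'
          · exact hne he'
          · have := Walk.snd_mem_support_of_mem_edges q' he'
            exact ((Walk.cons_isPath_iff _ _).1 hq).2 this
      · rw [Walk.edges_cons, Walk.edges_cons]
        refine List.Sublist.cons_cons _ ?_
        conv_rhs => rw [← q.take_spec hu, Walk.edges_append]
        exact List.sublist_append_left _ _
    · obtain ⟨x, c, hc, hs⟩ := ih h.tail hq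
      exact ⟨x, c, hc, by rw [Walk.edges_cons]; exact hs.cons _⟩

/-- A covering map of graphs: a homomorphism bijective on neighbourhoods. -/
structure IsCov {V W : Type*} {G : SimpleGraph V} {H : SimpleGraph W} (f : H →g G) : Prop where
  inj : ∀ x y z, H.Adj x y → H.Adj x z → f y = f z → y = z
  surj : ∀ x b, G.Adj (f x) b → ∃ y, H.Adj x y ∧ f y = b

lemma IsCov.ncard {V W : Type*} {G : SimpleGraph V} {H : SimpleGraph W} {f : H →g G}
    (hf : IsCov f) (x : W) : (H.neighborSet x).ncard = (G.neighborSet (f x)).ncard := by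
  have : G.neighborSet (f x) = f '' H.neighborSet x := by
    ext b
    constructor
    · intro hb
      obtain ⟨y, hy, rfl⟩ := hf.surj x b hb
      exact ⟨y, hy, rfl⟩
    · rintro ⟨y, hy, rfl⟩
      exact f.map_adj hy
  rw [this, Set.InjOn.ncard_image]
  intro y hy z hz h
  exact hf.inj x y z hy hz h

lemma IsCov.chain {V W : Type*} {G : SimpleGraph V} {H : SimpleGraph W} {f : H →g G}
    (hf : IsCov f) {a b : W} (p : H.Walk a b) (h : List.IsChain (· ≠ ·) p.edges) :
    List.IsChain (· ≠ ·) (p.map f).edges := by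
  induction p with
  | nil => simp
  | @cons u v w hadj q ih =>
    cases q with
    | nil => simp
    | @cons _ z _ hvz q' =>
      simp only [Walk.map_cons, Walk.edges_cons] at h ih ⊢
      rw [List.isChain_cons_cons] at h ⊢
      refine ⟨?_, ih h.2⟩
      intro he
      apply h.1
      have h1 : f u = f z := by
        rw [Sym2.eq_swap] at he
        exact (Sym2.congr_right).1 he
      have := hf.inj v u z hadj.symm hvz h1
      rw [this, Sym2.eq_swap]

lemma IsCov.cycle {V W : Type*} {G : SimpleGraph V} {H : SimpleGraph W} {f : H →g G}
    (hf : IsCov f) {a : W} (p : H.Walk a a) (h : p.IsCycle) :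
    ∃ (x : V) (c : G.Walk x x), c.IsCycle ∧ List.Sublist c.edges (p.map f).edges := by
  apply nb_cycle
  · exact hf.chain p h.edges_nodup.isChain
  · intro hp
    have h3 := h.three_le_length
    have := Walk.isPath_iff_nil.1 hp
    have h0 : (p.map f).length = 0 := Walk.length_eq_zero_iff.2 this
    rw [Walk.length_map] at h0
    omega

lemma IsCov.egirth {V W : Type*} {G : SimpleGraph V} {H : SimpleGraph W} {f : H →g G}
    (hf : IsCov f) : G.egirth ≤ H.egirth := by
  rw [le_egirth]
  intro a p hp
  obtain ⟨x, c, hc, hs⟩ := hf.cycle p hp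
  refine (egirth_le_length hc).trans ?_
  have := hs.length_le
  simp only [Walk.length_edges, Walk.length_map] at this
  exact_mod_cast this

/-! ### The mod 2 homology cover -/

/-- Indicator of an edge. -/
def dl {V : Type*} (e : Sym2 V) : Sym2 V → ZMod 2 := Pi.single e 1

lemma add_self2 {V : Type*} (f : Sym2 V → ZMod 2) : f + f = 0 := by
  funext e
  exact CharTwo.add_self_eq_zero _

/-- parity vector of a walk -/
def par {V : Type*} {G : SimpleGraph V} {a b : V} (p : G.Walk a b) : Sym2 V → ZMod 2 :=
  (p.edges.map dl).sum

section par
variable {V : Type*} {G : SimpleGraph V}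

@[simp] lemma par_nil {a : V} : par (Walk.nil : G.Walk a a) = 0 := by simp [par]

@[simp] lemma par_cons {a b c : V} (h : G.Adj a b) (p : G.Walk b c) :
    par (Walk.cons h p) = dl s(a, b) + par p := by simp [par]

@[simp] lemma par_append {a b c : V} (p : G.Walk a b) (q : G.Walk b c) :
    par (p.append q) = par p + par q := by simp [par]

@[simp] lemma par_reverse {a b : V} (p : G.Walk a b) :
    par p.reverse = par p := by simp [par]

lemma par_apply {a b : V} (p : G.Walk a b) (e : Sym2 V) :
    par p e = (p.edges.count e : ZMod 2) := by
  unfold par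
  induction p.edges with
  | nil => simp
  | cons d l ih =>
    rw [List.map_cons, List.sum_cons, Pi.add_apply, ih, List.count_cons]
    by_cases h : d = e
    · subst h; simp [dl, add_comm]
    · simp [dl, h, Ne.symm h]

lemma par_nodup {a b : V} (p : G.Walk a b) (h : p.edges.Nodup) (e : Sym2 V) :
    par p e ≠ 0 ↔ e ∈ p.edges := by
  rw [par_apply]
  by_cases he : e ∈ p.edges
  · simp [List.count_eq_one_of_mem h he, he]
  · simp [List.count_eq_zero_of_not_mem he, he]

lemma par_mem {a b : V} (p : G.Walk a b) (e : Sym2 V) (h : par p e ≠ 0) : e ∈ p.edges := by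
  rw [par_apply] at h
  by_contra he
  simp [List.count_eq_zero_of_not_mem he] at h

end par

/-- The mod 2 homology cover (not necessarily connected). -/
def Cov {V : Type*} (G : SimpleGraph V) : SimpleGraph (V × (Sym2 V → ZMod 2)) where
  Adj x y := G.Adj x.1 y.1 ∧ y.2 = x.2 + dl s(x.1, y.1)
  symm := ⟨by
    rintro x y ⟨h, h2⟩
    refine ⟨h.symm, ?_⟩
    rw [h2, Sym2.eq_swap, add_assoc, add_self2, add_zero]⟩
  loopless := ⟨fun x h => G.loopless.irrefl _ h.1⟩

def Cov.pr {V : Type*} (G : SimpleGraph V) : Cov G →g G where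
  toFun := Prod.fst
  map_rel' h := h.1

lemma Cov.isCov {V : Type*} (G : SimpleGraph V) : IsCov (Cov.pr G) where
  inj := by
    rintro x y z ⟨_, h1⟩ ⟨_, h2⟩ (h : y.1 = z.1)
    exact Prod.ext h (by rw [h1, h2, h])
  surj := by
    intro x b hb
    exact ⟨(b, x.2 + dl s(x.1, b)), ⟨hb, rfl⟩, rfl⟩

lemma Cov.walk {V : Type*} {G : SimpleGraph V} {x y : V × (Sym2 V → ZMod 2)}
    (p : (Cov G).Walk x y) : y.2 = x.2 + par (p.map (Cov.pr G)) := by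
  induction p with
  | nil => simp
  | @cons u v w h q ih =>
    rw [ih, h.2, Walk.map_cons, par_cons, add_assoc]
    rfl

lemma Cov.egirth_succ {V : Type*} {G : SimpleGraph V} {n : ℕ} (h : (n : ℕ∞) ≤ G.egirth) :
    ((n + 1 : ℕ) : ℕ∞) ≤ (Cov G).egirth := by
  rw [le_egirth]
  intro a p hp
  obtain ⟨x, c, hc, hs⟩ := (Cov.isCov G).cycle p hp
  have h1 : n ≤ c.length := by exact_mod_cast h.trans (egirth_le_length hc)
  have h2 := hs.length_le
  by_contra hlt
  have h3 : p.length < n + 1 := by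
    have := not_le.1 hlt
    exact_mod_cast this
  have h4 : c.edges = (p.map (Cov.pr G)).edges := by
    apply hs.eq_of_length_le
    simp only [Walk.length_edges, Walk.length_map] at *
    omega
  have h5 := Cov.walk p
  have h6 : par (p.map (Cov.pr G)) = 0 := by simpa using h5.symm
  have hc3 := hc.three_le_length
  have hnd := hc.edges_nodup
  rw [h4] at hnd
  cases hed : (p.map (Cov.pr G)).edges with
  | nil =>
    rw [hed] at h4
    have := Walk.length_edges c
    rw [h4] at this
    simp at this
    omega
  | cons e l =>
    have := (par_nodup _ hnd e).2 (by rw [hed]; simp)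
    exact this (by rw [h6]; rfl)

/-- existence of cubic graphs of large girth -/
lemma exists_cubic (n : ℕ) : ∃ (V : Type) (_ : Fintype V) (G : SimpleGraph V),
    Nonempty V ∧ (∀ v, (G.neighborSet v).ncard = 3) ∧ (n : ℕ∞) ≤ G.egirth := by
  induction n with
  | zero =>
    refine ⟨Fin 4, inferInstance, ⊤, inferInstance, ?_, by simp⟩
    intro v
    rw [neighborSet_top, Set.ncard_compl]
    simp
  | succ n ih =>
    obtain ⟨V, _, G, hV, hr, hg⟩ := ih
    refine ⟨V × (Sym2 V → ZMod 2), inferInstance, Cov G, inferInstance, ?_, Cov.egirth_succ hg⟩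
    intro v
    rw [(Cov.isCov G).ncard]
    exact hr _


/-! ### Short walks with prescribed parity -/

section wt
variable {V : Type*} [Fintype V] {G : SimpleGraph V}

/-- Hamming weight -/
def wt (f : Sym2 V → ZMod 2) : ℕ := (Finset.univ.filter fun e => f e ≠ 0).card

lemma wt_add (f h : Sym2 V → ZMod 2) (hs : ∀ e, h e ≠ 0 → f e ≠ 0) :
    wt (f + h) + wt h = wt f := by
  unfold wt
  rw [← Finset.card_union_of_disjoint]
  · congr 1
    ext e
    have := hs e
    simp only [Finset.mem_union, Finset.mem_filter, Finset.mem_univ, true_and, Pi.add_apply]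
    generalize f e = x at *
    generalize h e = y at *
    revert x y
    decide
  · rw [Finset.disjoint_left]
    intro e
    have := hs e
    simp only [Finset.mem_filter, Finset.mem_univ, true_and, Pi.add_apply]
    generalize f e = x at *
    generalize h e = y at *
    revert x y
    decide

lemma wt_dl (e : Sym2 V) : wt (dl e) = 1 := by
  unfold wt
  rw [Finset.card_eq_one]
  refine ⟨e, ?_⟩
  ext d
  rw [Finset.mem_filter, Finset.mem_singleton]
  by_cases h : d = e
  · subst h; simp [dl]
  · simp [dl, h]

lemma wt_eq_zero (f : Sym2 V → ZMod 2) : wt f = 0 ↔ f = 0 := by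
  unfold wt
  rw [Finset.card_eq_zero, Finset.filter_eq_empty_iff]
  constructor
  · intro h
    funext e
    simpa using h (Finset.mem_univ e)
  · rintro rfl e _
    simp

lemma wt_par_le {a b : V} (p : G.Walk a b) : wt (par p) ≤ p.length := by
  rw [← Walk.length_edges]
  refine le_trans (Finset.card_le_card ?_) (List.toFinset_card_le _)
  intro e he
  rw [List.mem_toFinset]
  exact par_mem p e (Finset.mem_filter.1 he).2

lemma wt_par_nodup {a b : V} (p : G.Walk a b) (h : p.edges.Nodup) : wt (par p) = p.length := by
  rw [← Walk.length_edges, ← List.toFinset_card_of_nodup h]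
  unfold wt
  congr 1
  ext e
  simp [par_nodup p h]

/-- boundary at `x` -/
def bd (x : V) (f : Sym2 V → ZMod 2) : ZMod 2 := ∑ e, if x ∈ e then f e else 0

lemma bd_add (x : V) (f h : Sym2 V → ZMod 2) : bd x (f + h) = bd x f + bd x h := by
  unfold bd
  rw [← Finset.sum_add_distrib]
  refine Finset.sum_congr rfl fun e _ => ?_
  split_ifs <;> simp

lemma bd_dl (x : V) (e : Sym2 V) : bd x (dl e) = if x ∈ e then 1 else 0 := by
  unfold bd
  rw [Finset.sum_eq_single e]
  · simp [dl]
  · intro d _ hd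
    simp [dl, hd]
  · simp

lemma bd_par (x : V) {a b : V} (p : G.Walk a b) :
    bd x (par p) = (if x = a then 1 else 0) + (if x = b then 1 else 0) := by
  induction p with
  | nil => rw [CharTwo.add_self_eq_zero]; simp [bd]
  | @cons u v w h q ih =>
    rw [par_cons, bd_add, ih, bd_dl]
    have hne : u ≠ v := h.ne
    by_cases h1 : x = u
    · subst h1
      simp [hne]
    · by_cases h2 : x = v
      · subst h2
        simp [h1, ← add_assoc, CharTwo.add_self_eq_zero]
      · simp [h1, h2]

lemma exists_edge {a b : V} (p : G.Walk a b) (h : a ≠ b) :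
    ∃ c, ∃ _ : G.Adj a c, par p s(a, c) ≠ 0 := by
  by_contra hcon
  have h1 := bd_par a p
  simp only [if_true, h, if_false, add_zero] at h1
  have h0 : bd a (par p) = 0 := by
    unfold bd
    refine Finset.sum_eq_zero fun e _ => ?_
    split_ifs with hae
    · obtain ⟨c, rfl⟩ := Sym2.mem_iff_exists.1 hae
      by_contra hne
      exact hcon ⟨c, p.adj_of_mem_edges (par_mem p _ hne), hne⟩
    · rfl
  rw [h0] at h1
  exact zero_ne_one h1

lemma exists_sub_walk (n : ℕ) : ∀ {a b : V} (p : G.Walk a b), wt (par p) = n →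
    ∃ q : G.Walk a b, ∀ e ∈ q.edges, par p e ≠ 0 := by
  induction n with
  | zero =>
    intro a b p hp
    by_cases hab : a = b
    · subst hab; exact ⟨Walk.nil, by simp⟩
    · obtain ⟨c, _, hc⟩ := exists_edge p hab
      rw [wt_eq_zero] at hp
      simp [hp] at hc
  | succ n ih =>
    intro a b p hp
    by_cases hab : a = b
    · subst hab; exact ⟨Walk.nil, by simp⟩
    · obtain ⟨c, hac, hc⟩ := exists_edge p hab
      have hsub : ∀ e, dl s(c, a) e ≠ 0 → par p e ≠ 0 := by
        intro e he
        by_cases h : e = s(c, a)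
        · subst h; rwa [Sym2.eq_swap]
        · simp [dl, h] at he
      have hw := wt_add (par p) (dl s(c, a)) hsub
      have hpc : par (Walk.cons hac.symm p) = par p + dl s(c, a) := by
        rw [par_cons, add_comm]
      rw [wt_dl] at hw
      obtain ⟨q, hq⟩ := ih (Walk.cons hac.symm p) (by rw [hpc]; omega)
      refine ⟨Walk.cons hac q, ?_⟩
      intro e he
      rw [Walk.edges_cons, List.mem_cons] at he
      rcases he with rfl | he
      · exact hc
      · intro h0
        have h1 := hq e he
        rw [hpc, Pi.add_apply, h0, zero_add] at h1
        exact hsub e h1 h0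

lemma exists_cycle_in {a : V} (p : G.Walk a a) (h : par p ≠ 0) :
    ∃ (x : V) (c : G.Walk x x), c.IsCycle ∧ ∀ e ∈ c.edges, par p e ≠ 0 := by
  obtain ⟨e, he⟩ := Function.ne_iff.1 h
  induction e with
  | _ x y =>
  have he' : par p s(x, y) ≠ 0 := he
  have hmem := par_mem p _ he'
  have hxy : G.Adj x y := p.adj_of_mem_edges hmem
  have hx : x ∈ p.support := p.fst_mem_support_of_mem_edges hmem
  -- a walk from `y` to `x` whose parity is `par p + dl s(x,y)`
  let r : G.Walk x x := ((p.takeUntil x hx).reverse.append p).append (p.takeUntil x hx)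
  have hr : par r = par p := by
    simp only [r, par_append, par_reverse]
    rw [add_comm, ← add_assoc, add_self2, zero_add]
  have hsub : ∀ e, dl s(y, x) e ≠ 0 → par p e ≠ 0 := by
    intro e he
    by_cases h : e = s(y, x)
    · subst h; rwa [Sym2.eq_swap]
    · simp [dl, h] at he
  obtain ⟨q, hq⟩ := exists_sub_walk _ (Walk.cons hxy.symm r) rfl
  rw [par_cons, hr] at hq
  have hq' : ∀ e ∈ q.edges, par p e ≠ 0 ∧ e ≠ s(x, y) := by
    intro e he
    have h1 := hq e he
    rw [Pi.add_apply] at h1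
    constructor
    · intro h0
      rw [h0, add_zero] at h1
      exact hsub e h1 h0
    · rintro rfl
      have h2 : dl s(y, x) s(x, y) = 1 := by rw [Sym2.eq_swap]; simp [dl]
      rw [h2] at h1
      revert h1 he'
      generalize par p s(x, y) = z
      revert z
      decide
  refine ⟨x, Walk.cons hxy q.bypass, ?_, ?_⟩
  · rw [Walk.cons_isCycle_iff]
    exact ⟨q.bypass_isPath, fun h => (hq' _ (q.edges_bypass_subset_edges h)).2 rfl⟩
  · intro e he
    rw [Walk.edges_cons, List.mem_cons] at he
    rcases he with rfl | he
    · exact he'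
    · exact (hq' _ (q.edges_bypass_subset_edges he)).1

lemma short_walk {g : ℕ} (hg : (g : ℕ∞) ≤ G.egirth)
    (hd : ∀ a b : V, ∃ p : G.Walk a b, p.length ≤ g) (n : ℕ) :
    ∀ {a b : V} (p : G.Walk a b), wt (par p) = n →
      ∃ q : G.Walk a b, par q = par p ∧ q.length ≤ 3 * n := by
  induction n using Nat.strong_induction_on with
  | _ n ih =>
  intro a b p hp
  by_cases hab : a = b
  · subst hab
    by_cases h0 : par p = 0
    · exact ⟨Walk.nil, by simp [h0], by simp⟩
    · obtain ⟨x, c, hc, hcp⟩ := exists_cycle_in p h0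
      have hw := wt_add (par p) (par c) (fun e he => hcp e (par_mem c e he))
      rw [wt_par_nodup c hc.edges_nodup] at hw
      have hgc : g ≤ c.length := by exact_mod_cast hg.trans (egirth_le_length hc)
      obtain ⟨r, hr⟩ := hd a x
      have h3 := hc.three_le_length
      let t : G.Walk a a := (r.append c).append r.reverse
      have ht : par t = par c := by
        simp only [t, par_append, par_reverse]
        rw [add_comm, ← add_assoc, add_self2, zero_add]
      have htl : t.length = 2 * r.length + c.length := by
        simp only [t, Walk.length_append, Walk.length_reverse]; ring
      obtain ⟨q, hq, hql⟩ := ih (wt (par p + par c)) (by omega) (p.append t)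
        (by rw [par_append, ht])
      refine ⟨q.append t, ?_, ?_⟩
      · rw [par_append, hq, par_append, add_assoc, add_self2, add_zero]
      · rw [Walk.length_append]
        omega
  · obtain ⟨c, hac, hc⟩ := exists_edge p hab
    have hsub : ∀ e, dl s(c, a) e ≠ 0 → par p e ≠ 0 := by
      intro e he
      by_cases h : e = s(c, a)
      · subst h; rwa [Sym2.eq_swap]
      · simp [dl, h] at he
    have hw := wt_add (par p) (dl s(c, a)) hsub
    have hpc : par (Walk.cons hac.symm p) = par p + dl s(c, a) := by
      rw [par_cons, add_comm]
    rw [wt_dl] at hw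
    obtain ⟨q, hq, hql⟩ := ih (n - 1) (by omega) (Walk.cons hac.symm p) (by rw [hpc]; omega)
    refine ⟨Walk.cons hac q, ?_, ?_⟩
    · rw [par_cons, hq, par_cons, ← add_assoc, Sym2.eq_swap, add_self2, zero_add]
    · rw [Walk.length_cons]
      omega

end wt

/-! ### Surgery -/

section surgery
variable {V : Type} {G : SimpleGraph V}

lemma cycle_edge_path {a x y : V} (c : G.Walk a a) (hc : c.IsCycle) (h : s(x, y) ∈ c.edges) :
    ∃ q : G.Walk y x, s(x, y) ∉ q.edges ∧ q.length + 1 = c.length := by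
  have hx : x ∈ c.support := c.fst_mem_support_of_mem_edges h
  have hr : (c.rotate x hx).IsCycle := hc.rotate hx
  have hmem : s(x, y) ∈ (c.rotate x hx).edges := (c.rotate_edges x hx).mem_iff.2 h
  have hl : (c.rotate x hx).length = c.length := by simp
  rw [← hl]
  generalize c.rotate x hx = w at *
  cases w with
  | nil => simp at hmem
  | @cons _ z _ hxz p =>
    have hp := (Walk.cons_isCycle_iff _ _).1 hr
    rw [Walk.edges_cons, List.mem_cons] at hmem
    by_cases hyz : y = z
    · subst hyz
      exact ⟨p, hp.2, by simp⟩
    · have hmem' : s(x, y) ∈ p.edges := by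
        rcases hmem with h | h
        · exact absurd (Sym2.congr_right.1 h) hyz
        · exact h
      -- reverse the cycle
      have hrev := hr.reverse
      have hy : s(x, y) ∈ p.reverse.edges := by simpa using hmem'
      have hpr : p.reverse.IsPath := hp.1.reverse
      have hlen : p.reverse.length = p.length := by simp
      rw [Walk.length_cons, ← hlen]
      have hxz' : s(x, y) ≠ s(x, z) := fun h => hyz (Sym2.congr_right.1 h)
      generalize p.reverse = r at *
      cases r with
      | nil => simp at hy
      | @cons _ t _ hxt r' =>
        rw [Walk.edges_cons, List.mem_cons] at hy
        have hpr' := (Walk.cons_isPath_iff _ _).1 hpr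
        have hnot : ∀ s, s(x, s) ∉ r'.edges := fun s hs =>
          hpr'.2 (r'.fst_mem_support_of_mem_edges hs)
        have hyt : y = t := by
          rcases hy with h | h
          · exact Sym2.congr_right.1 h
          · exact absurd h (hnot _)
        subst hyt
        refine ⟨r'.concat hxz.symm, ?_, ?_⟩
        · rw [Walk.edges_concat, List.concat_eq_append, List.mem_append, List.mem_singleton]
          rintro (h | h)
          · exact hnot _ h
          · exact hxz' (by rw [h, Sym2.eq_swap])
        · simp

/-- The graph after the surgery. -/
def Sur (G : SimpleGraph V) (u v : V) (τ : V → V)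
    (hτ : ∀ x, G.Adj u x ∨ G.Adj v x → (G.Adj u (τ x) ∨ G.Adj v (τ x)) ∧ τ (τ x) = x ∧ τ x ≠ x) :
    SimpleGraph V where
  Adj x y := (x ≠ u ∧ x ≠ v) ∧ (y ≠ u ∧ y ≠ v) ∧
    (G.Adj x y ∨ ((G.Adj u x ∨ G.Adj v x) ∧ y = τ x))
  symm := ⟨by
    rintro x y ⟨hx, hy, h | ⟨h, rfl⟩⟩
    · exact ⟨hy, hx, Or.inl h.symm⟩
    · exact ⟨hy, hx, Or.inr ⟨(hτ x h).1, (hτ x h).2.1.symm⟩⟩⟩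
  loopless := ⟨by
    rintro x ⟨hx, hy, h | ⟨h, h2⟩⟩
    · exact G.loopless.irrefl _ h
    · exact (hτ x h).2.2 h2.symm⟩

lemma sur_prefix {u v : V} {τ : V → V} {hτ} {y x : V} (q : (Sur G u v τ hτ).Walk y x)
    (hy : y ≠ u ∧ y ≠ v) : ∃ (z : V) (r : G.Walk y z), u ∉ r.support ∧ v ∉ r.support ∧
      r.length ≤ q.length ∧ (z = x ∨ ((G.Adj u z ∨ G.Adj v z) ∧ s(z, τ z) ∈ q.edges ∧
        r.length + 1 ≤ q.length)) := by
  induction q with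
  | @nil a => exact ⟨a, Walk.nil, by simpa using hy.1.symm, by simpa using hy.2.symm, by simp,
      Or.inl rfl⟩
  | @cons a b c hab q ih =>
    obtain ⟨z, r, h1, h2, h3, h4⟩ := ih hab.2.1
    rcases hab.2.2 with h | ⟨h, hb⟩
    · refine ⟨z, Walk.cons h r, ?_, ?_, ?_, ?_⟩
      · simp [h1, hy.1.symm]
      · simp [h2, hy.2.symm]
      · simpa using h3
      · rcases h4 with h4 | ⟨h4, h5, h6⟩
        · exact Or.inl h4
        · exact Or.inr ⟨h4, by simp [h5], by simpa using h6⟩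
    · subst hb
      exact ⟨a, Walk.nil, by simpa using hy.1.symm, by simpa using hy.2.symm, by simp,
        Or.inr ⟨h, by simp, by simp⟩⟩

/-- Two distinct neighbours of `u` are not joined by a short walk avoiding `u`. -/
lemma no_short {g : ℕ} (hg : (g : ℕ∞) ≤ G.egirth) {u y z : V} (hy : G.Adj u y) (hz : G.Adj u z)
    (hyz : y ≠ z) (r : G.Walk y z) (hu : u ∉ r.support) : g ≤ r.length + 2 := by
  have hb : u ∉ r.bypass.support := fun h => hu (r.support_bypass_subset_support h)
  have hcyc : (Walk.cons hy (r.bypass.concat hz.symm)).IsCycle := by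
    rw [Walk.cons_isCycle_iff]
    constructor
    · exact r.bypass_isPath.concat hb _
    · rw [Walk.edges_concat, List.concat_eq_append, List.mem_append, List.mem_singleton]
      rintro (h | h)
      · exact hb (Walk.fst_mem_support_of_mem_edges _ h)
      · rw [Sym2.eq_swap] at h
        exact hyz (Sym2.congr_left.1 h)
  have h1 := hg.trans (egirth_le_length hcyc)
  have h2 : g ≤ (Walk.cons hy (r.bypass.concat hz.symm)).length := by exact_mod_cast h1
  have h3 := r.length_bypass_le_length
  simp only [Walk.length_cons, Walk.length_concat] at h2
  omega

lemma sur_egirth {g : ℕ} (hg : (g : ℕ∞) ≤ G.egirth) {u v : V}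
    (huv : ∀ p : G.Walk u v, g < p.length) {τ : V → V} {hτ}
    (h1 : ∀ x, G.Adj u x → G.Adj v (τ x)) (h2 : ∀ x, G.Adj v x → G.Adj u (τ x)) :
    (g : ℕ∞) ≤ (Sur G u v τ hτ).egirth := by
  rw [le_egirth]
  intro a c hc
  by_contra hlt
  have hlt' : c.length < g := by
    have := not_le.1 hlt
    exact_mod_cast this
  by_cases hall : ∀ e ∈ c.edges, e ∈ G.edgeSet
  · have := hg.trans (egirth_le_length (hc.transfer hall))
    rw [Walk.length_transfer] at this
    exact hlt this
  · push Not at hall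
    obtain ⟨e, he, heG⟩ := hall
    induction e with
    | _ x y =>
    obtain ⟨q, hq, hql⟩ := cycle_edge_path c hc he
    have hadj := c.adj_of_mem_edges he
    obtain ⟨hx, hy, hxy⟩ := hadj.symm.symm
    have hxy' : (G.Adj u x ∨ G.Adj v x) ∧ y = τ x := hxy.resolve_left heG
    obtain ⟨hxN, rfl⟩ := hxy'
    obtain ⟨z, r, hur, hvr, hrl, hz⟩ := sur_prefix q hy
    have opp : ∀ {s t : V} (r : G.Walk s t), G.Adj u s → G.Adj v t → r.length + 2 ≤ g → False := by
      intro s t r hs ht hl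
      have := huv (Walk.cons hs (r.concat ht.symm))
      simp only [Walk.length_cons, Walk.length_concat] at this
      omega
    have opp' : ∀ {s t : V} (r : G.Walk s t), G.Adj v s → G.Adj u t → r.length + 2 ≤ g →
        False := by
      intro s t r hs ht hl
      exact opp r.reverse ht hs (by simpa using hl)
    rcases hz with rfl | ⟨hzN, hze, hzl⟩
    · rcases hxN with hxN | hxN
      · exact opp' r (h1 _ hxN) hxN (by omega)
      · exact opp r (h2 _ hxN) hxN (by omega)
    · have hne : τ x ≠ z := by
        rintro rfl
        rw [(hτ x hxN).2.1, Sym2.eq_swap] at hze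
        exact hq hze
      rcases (hτ x hxN).1 with hyN | hyN <;> rcases hzN with hzN | hzN
      · have := no_short hg hyN hzN hne r hur
        omega
      · exact opp r hyN hzN (by omega)
      · exact opp' r hyN hzN (by omega)
      · have := no_short hg hyN hzN hne r hvr
        omega

lemma exists_tau (u v : V) (hdisj : ∀ x, G.Adj u x → ¬ G.Adj v x)
    (e : G.neighborSet u ≃ G.neighborSet v) : ∃ τ : V → V,
      (∀ x, G.Adj u x → G.Adj v (τ x)) ∧ (∀ x, G.Adj v x → G.Adj u (τ x)) ∧
      (∀ x, G.Adj u x ∨ G.Adj v x → τ (τ x) = x) := by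
  let τ : V → V := fun x => if h : G.Adj u x then (e ⟨x, h⟩ : V) else
    if h : G.Adj v x then (e.symm ⟨x, h⟩ : V) else x
  have t1 : ∀ x (h : G.Adj u x), τ x = e ⟨x, h⟩ := fun x h => by simp [τ, h]
  have t2 : ∀ x (h : G.Adj v x), τ x = e.symm ⟨x, h⟩ := fun x h => by
    have : ¬ G.Adj u x := fun h' => hdisj x h' h
    simp [τ, h, this]
  have a1 : ∀ x, G.Adj u x → G.Adj v (τ x) := fun x h => by
    rw [t1 x h]; exact (e ⟨x, h⟩).2
  have a2 : ∀ x, G.Adj v x → G.Adj u (τ x) := fun x h => by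
    rw [t2 x h]; exact (e.symm ⟨x, h⟩).2
  refine ⟨τ, a1, a2, ?_⟩
  rintro x (h | h)
  · rw [t2 _ (a1 x h)]
    simp [t1 x h]
  · rw [t1 _ (a2 x h)]
    simp [t2 x h]

lemma surgery [Fintype V] {g : ℕ} (hg3 : 3 ≤ g) (hg : (g : ℕ∞) ≤ G.egirth)
    (hr : ∀ x, (G.neighborSet x).ncard = 3) {u v : V}
    (huv : ∀ p : G.Walk u v, g < p.length) :
    ∃ (W : Type) (_ : Fintype W) (H : SimpleGraph W), Nonempty W ∧
      (∀ x, (H.neighborSet x).ncard = 3) ∧ (g : ℕ∞) ≤ H.egirth ∧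
      Fintype.card W < Fintype.card V := by
  have hne : u ≠ v := by
    rintro rfl
    have := huv Walk.nil
    simp at this
  have hnadj : ¬ G.Adj u v := fun h => by
    have := huv (Walk.cons h Walk.nil)
    simp at this; omega
  have hdisj : ∀ x, G.Adj u x → ¬ G.Adj v x := fun x h1 h2 => by
    have := huv (Walk.cons h1 (Walk.cons h2.symm Walk.nil))
    simp at this; omega
  have hdisj3 : ∀ x y, G.Adj u x → G.Adj v y → ¬ G.Adj x y := fun x y h1 h2 h3 => by
    have := huv (Walk.cons h1 (Walk.cons h3 (Walk.cons h2.symm Walk.nil)))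
    simp at this; omega
  have e : G.neighborSet u ≃ G.neighborSet v := by
    apply Fintype.equivOfCardEq
    have h1 := hr u
    have h2 := hr v
    rw [Set.ncard_eq_toFinset_card', Set.toFinset_card] at h1 h2
    rw [h1, h2]
  obtain ⟨τ, a1, a2, a3⟩ := exists_tau u v hdisj e
  have hτ : ∀ x, G.Adj u x ∨ G.Adj v x →
      (G.Adj u (τ x) ∨ G.Adj v (τ x)) ∧ τ (τ x) = x ∧ τ x ≠ x := by
    intro x hx
    refine ⟨hx.symm.imp (a2 x) (a1 x), a3 x hx, ?_⟩
    intro h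
    rcases hx with hx | hx
    · have := a1 x hx
      rw [h] at this
      exact hdisj x hx this
    · have := a2 x hx
      rw [h] at this
      exact hdisj x this hx
  have hgS := sur_egirth (τ := τ) (hτ := hτ) hg huv a1 a2
  let S : Set V := {x | x ≠ u ∧ x ≠ v}
  let H := (Sur G u v τ hτ).induce S
  refine ⟨S, inferInstance, H, ?_, ?_, ?_, ?_⟩
  · have : (G.neighborSet u).Nonempty := by
      rw [Set.nonempty_iff_ne_empty]
      intro h
      have := hr u
      rw [h] at this
      simp at this
    obtain ⟨x, hx⟩ := this
    exact ⟨⟨x, fun h => by subst h; exact G.loopless.irrefl _ hx,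
      fun h => by subst h; exact hnadj hx⟩⟩
  · rintro ⟨x, hxu, hxv⟩
    have htN : ∀ x, G.Adj u x ∨ G.Adj v x → τ x ≠ u ∧ τ x ≠ v := by
      intro x hx
      constructor
      · intro h
        rcases (hτ x hx).1 with h' | h'
        · rw [h] at h'; exact G.loopless.irrefl _ h'
        · rw [h] at h'; exact hnadj h'.symm
      · intro h
        rcases (hτ x hx).1 with h' | h'
        · rw [h] at h'; exact hnadj h'
        · rw [h] at h'; exact G.loopless.irrefl _ h'
    have hnt : ∀ x, G.Adj u x ∨ G.Adj v x → ¬ G.Adj x (τ x) := by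
      rintro x (hx | hx) h
      · exact hdisj3 _ _ hx (a1 x hx) h
      · exact hdisj3 _ _ (a2 x hx) hx h.symm
    let F : V → V := fun y => if y = u ∨ y = v then τ x else y
    have himg : Subtype.val '' (H.neighborSet ⟨x, hxu, hxv⟩) = F '' G.neighborSet x := by
      ext y
      constructor
      · rintro ⟨y, hy, rfl⟩
        obtain ⟨-, hy2, hy3⟩ : (Sur G u v τ hτ).Adj x y := hy
        rcases hy3 with h | ⟨h, h'⟩
        · exact ⟨y, h, by simp [F, hy2.1, hy2.2]⟩
        · rcases h with h | h
          · exact ⟨u, h.symm, by simp [F, h']⟩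
          · exact ⟨v, h.symm, by simp [F, h']⟩
      · rintro ⟨y, hy, rfl⟩
        have hy' : G.Adj x y := hy
        by_cases hyu : y = u ∨ y = v
        · have hxN : G.Adj u x ∨ G.Adj v x := by
            rcases hyu with rfl | rfl
            · exact Or.inl hy'.symm
            · exact Or.inr hy'.symm
          refine ⟨⟨τ x, htN x hxN⟩, ?_, by simp [F, hyu]⟩
          exact ⟨⟨hxu, hxv⟩, htN x hxN, Or.inr ⟨hxN, rfl⟩⟩
        · have hyu' := not_or.1 hyu
          refine ⟨⟨y, hyu'⟩, ?_, by simp [F, hyu]⟩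
          exact ⟨⟨hxu, hxv⟩, hyu', Or.inl hy'⟩
    rw [← Set.ncard_image_of_injective _ Subtype.val_injective, himg, Set.InjOn.ncard_image, hr]
    intro y hy z hz hyz
    have hy' : G.Adj x y := hy
    have hz' : G.Adj x z := hz
    by_cases c1 : y = u ∨ y = v <;> by_cases c2 : z = u ∨ z = v
    · rcases c1 with rfl | rfl <;> rcases c2 with rfl | rfl
      · rfl
      · exact absurd hz'.symm (hdisj x hy'.symm)
      · exact absurd hy'.symm (hdisj x hz'.symm)
      · rfl
    · simp only [F, c1, c2, if_true, if_false] at hyz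
      have hxN : G.Adj u x ∨ G.Adj v x := by
        rcases c1 with rfl | rfl
        · exact Or.inl hy'.symm
        · exact Or.inr hy'.symm
      rw [← hyz] at hz'
      exact absurd hz' (hnt x hxN)
    · simp only [F, c1, c2, if_true, if_false] at hyz
      have hxN : G.Adj u x ∨ G.Adj v x := by
        rcases c2 with rfl | rfl
        · exact Or.inl hz'.symm
        · exact Or.inr hz'.symm
      rw [hyz] at hy'
      exact absurd hy' (hnt x hxN)
    · simpa only [F, c1, c2, if_true, if_false] using hyz
  · exact hgS.trans (SimpleGraph.Embedding.induce S).isContained.egirth_le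
  · apply Fintype.card_subtype_lt (x := u)
    rintro ⟨h, -⟩
    exact h rfl

end surgery

/-- Cubic graphs with girth at least `g` and diameter at most `g`. -/
lemma exists_cubic_diam (g : ℕ) (hg3 : 3 ≤ g) : ∃ (V : Type) (_ : Fintype V) (G : SimpleGraph V),
    Nonempty V ∧ (∀ v, (G.neighborSet v).ncard = 3) ∧ (g : ℕ∞) ≤ G.egirth ∧
    ∀ a b : V, ∃ p : G.Walk a b, p.length ≤ g := by
  let P : ℕ → Prop := fun m => ∃ (V : Type) (_ : Fintype V) (G : SimpleGraph V),
    Nonempty V ∧ (∀ v, (G.neighborSet v).ncard = 3) ∧ (g : ℕ∞) ≤ G.egirth ∧ Fintype.card V = m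
  have hP : ∃ m, P m := by
    obtain ⟨V, i, G, h1, h2, h3⟩ := exists_cubic g
    exact ⟨_, V, i, G, h1, h2, h3, rfl⟩
  obtain ⟨V, i, G, h1, h2, h3, h4⟩ := Nat.find_spec hP
  refine ⟨V, i, G, h1, h2, h3, ?_⟩
  intro a b
  by_contra hcon
  push Not at hcon
  obtain ⟨W, j, H, k1, k2, k3, k4⟩ := surgery hg3 h3 h2 hcon
  rw [h4] at k4
  exact Nat.find_min hP k4 ⟨W, j, H, k1, k2, k3, rfl⟩

/-! ### The embedding -/

section emb
variable {V : Type} [Fintype V]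

lemma exists_embedding : ∃ φ : (Sym2 V → ZMod 2) → lp (fun _ : ℕ => ℝ) 1,
    ∀ f h, ‖φ f - φ h‖ = wt (f + h) := by
  let N := Fintype.card (Sym2 V)
  let e : Sym2 V ≃ Fin N := Fintype.equivFin _
  let F : (Sym2 V → ZMod 2) → ℕ → ℝ := fun f n =>
    if hn : n < N then ((f (e.symm ⟨n, hn⟩)).val : ℝ) else 0
  refine ⟨fun f => ∑ n ∈ Finset.range N, lp.single 1 n (F f n), ?_⟩
  intro f h
  have h1 : (∑ n ∈ Finset.range N, lp.single 1 n (F f n) -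
      ∑ n ∈ Finset.range N, lp.single 1 n (F h n) : lp (fun _ : ℕ => ℝ) 1) =
      ∑ n ∈ Finset.range N, lp.single 1 n ((fun n => F f n - F h n) n) := by
    rw [← Finset.sum_sub_distrib]
    refine Finset.sum_congr rfl fun n _ => ?_
    rw [← lp.single_sub]
  have h2 := lp.norm_sum_single (p := 1) (E := fun _ : ℕ => ℝ) (by simp)
    (fun n => F f n - F h n) (Finset.range N)
  simp only [ENNReal.toReal_one, Real.rpow_one] at h2
  rw [h1, h2, Finset.sum_range]
  rw [← e.sum_comp]
  unfold wt
  rw [Finset.card_filter]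
  push_cast
  refine Finset.sum_congr rfl fun d _ => ?_
  have : ∀ f, F f (e d) = ((f d).val : ℝ) := by
    intro f
    simp [F]
  rw [this, this, Pi.add_apply]
  have hz : ∀ z : ZMod 2, z = 0 ∨ z = 1 := by decide
  have h11 : (1 : ZMod 2) + 1 = 0 := by decide
  have hv : (1 : ZMod 2).val = 1 := by decide
  rcases hz (f d) with hx | hx <;> rcases hz (h d) with hy | hy <;>
    simp [hx, hy, h11, hv]

end emb

/-- Lifting walks to a connected component of the cover. -/
lemma lift_walk {V : Type} {G : SimpleGraph V} (C : (Cov G).ConnectedComponent) {a b : V}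
    (q : G.Walk a b) : ∀ (S : Sym2 V → ZMod 2) (h : (a, S) ∈ C.supp),
    ∃ (h' : (b, S + par q) ∈ C.supp) (w : C.toSimpleGraph.Walk ⟨(a, S), h⟩ ⟨(b, S + par q), h'⟩),
      w.length = q.length := by
  induction q with
  | @nil a =>
    intro S h
    have hS : S + par (Walk.nil : G.Walk a a) = S := by simp
    refine ⟨by rw [hS]; exact h, Walk.nil.copy rfl (by simp), by simp⟩
  | @cons a b c hab q ih =>
    intro S h
    have hadj : (Cov G).Adj (a, S) (b, S + dl s(a, b)) := ⟨hab, rfl⟩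
    have hm : (b, S + dl s(a, b)) ∈ C.supp := C.mem_supp_of_adj_mem_supp h hadj
    obtain ⟨h', w, hw⟩ := ih _ hm
    have hS : S + par (Walk.cons hab q) = S + dl s(a, b) + par q := by
      rw [par_cons, add_assoc]
    have hadj' : C.toSimpleGraph.Adj ⟨(a, S), h⟩ ⟨(b, S + dl s(a, b)), hm⟩ := hadj
    refine ⟨by rw [hS]; exact h', (Walk.cons hadj' w).copy rfl (by simp [add_assoc]), ?_⟩
    rw [Walk.length_copy, Walk.length_cons, Walk.length_cons, hw]

lemma comp_isCov {V : Type} {G : SimpleGraph V} (C : (Cov G).ConnectedComponent) :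
    IsCov ((Cov.pr G).comp C.toSimpleGraph_hom) where
  inj := by
    intro x y z hxy hxz h
    exact Subtype.ext ((Cov.isCov G).inj x.1 y.1 z.1 hxy hxz h)
  surj := by
    intro x b hb
    obtain ⟨y, hy, hyb⟩ := (Cov.isCov G).surj x.1 b hb
    exact ⟨⟨y, C.mem_supp_of_adj_mem_supp x.2 hy⟩, hy, hyb⟩

lemma main_aux (n : ℕ) : ∃ (V : Type) (_ : Fintype V) (G : SimpleGraph V),
    G.Connected ∧ (∀ v, (G.neighborSet v).ncard = 3) ∧ (n : ℕ∞) ≤ G.egirth ∧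
      l1Distortion G ≤ 3 := by
  obtain ⟨V, _, G, ⟨v₀⟩, hr, hg, hd⟩ := exists_cubic_diam (max n 3) (le_max_right _ _)
  let C : (Cov G).ConnectedComponent := (Cov G).connectedComponentMk (v₀, 0)
  have hcov := comp_isCov C
  have hconn : C.toSimpleGraph.Connected := C.connected_toSimpleGraph
  have hreg : ∀ v, (C.toSimpleGraph.neighborSet v).ncard = 3 := by
    intro v
    rw [hcov.ncard]
    exact hr _
  refine ⟨C, inferInstance, C.toSimpleGraph, hconn, hreg, ?_, ?_⟩
  · refine le_trans ?_ (hg.trans hcov.egirth)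
    exact_mod_cast le_max_left n 3
  · obtain ⟨φ, hφ⟩ := exists_embedding (V := V)
    -- the walk description
    have key : ∀ x y : C, ∀ w : C.toSimpleGraph.Walk x y,
        ∃ p : G.Walk x.1.1 y.1.1, p.length = w.length ∧ y.1.2 = x.1.2 + par p := by
      intro x y w
      refine ⟨(w.map C.toSimpleGraph_hom).map (Cov.pr G), 
        (Walk.length_map _ _).trans (Walk.length_map _ _), ?_⟩
      exact Cov.walk (w.map C.toSimpleGraph_hom)
    have hpar : ∀ S p : Sym2 V → ZMod 2, S + (S + p) = p := by
      intro S p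
      rw [← add_assoc, add_self2, zero_add]
    have hup : ∀ x y : C, wt (x.1.2 + y.1.2) ≤ C.toSimpleGraph.dist x y := by
      intro x y
      obtain ⟨w, hw⟩ := hconn.exists_walk_length_eq_dist x y
      obtain ⟨p, hp, hp2⟩ := key x y w
      rw [hp2, hpar, ← hw, ← hp]
      exact wt_par_le p
    have hlow : ∀ x y : C, C.toSimpleGraph.dist x y ≤ 3 * wt (x.1.2 + y.1.2) := by
      intro x y
      obtain ⟨w, -⟩ := hconn.exists_walk_length_eq_dist x y
      obtain ⟨p, -, hp2⟩ := key x y w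
      obtain ⟨q, hq, hql⟩ := short_walk hg hd _ p rfl
      obtain ⟨h', w', hw'⟩ := lift_walk C q x.1.2 x.2
      have hy : (⟨(y.1.1, x.1.2 + par q), h'⟩ : C) = y := by
        apply Subtype.ext
        apply Prod.ext
        · rfl
        · exact (by rw [hq, hp2] : x.1.2 + par q = y.1.2)
      rw [hp2, hpar]
      refine le_trans ?_ hql
      rw [← hw']
      have := dist_le (w'.copy rfl hy)
      rw [Walk.length_copy] at this
      exact this
    apply csInf_le
    · refine ⟨1, ?_⟩
      rintro c ⟨ψ, r, hr0, hψ⟩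
      let x : C := ⟨(v₀, 0), rfl⟩
      have hne : (C.toSimpleGraph.neighborSet x).Nonempty := by
        rw [Set.nonempty_iff_ne_empty]
        intro h
        have := hreg x
        rw [h] at this
        simp at this
      obtain ⟨y, hy⟩ := hne
      have hy1 : C.toSimpleGraph.dist x y = 1 := dist_eq_one_iff_adj.2 hy
      have := hψ x y
      rw [hy1] at this
      have h2 := this.1.trans this.2
      simp only [Nat.cast_one, mul_one] at h2
      exact le_of_mul_le_mul_left (by simpa using h2) hr0
    · refine ⟨fun x => φ x.1.2, 1 / 3, by norm_num, ?_⟩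
      intro x y
      rw [hφ]
      have h1 : (C.toSimpleGraph.dist x y : ℝ) ≤ 3 * wt (x.1.2 + y.1.2) := by
        exact_mod_cast hlow x y
      have h2 : (wt (x.1.2 + y.1.2) : ℝ) ≤ C.toSimpleGraph.dist x y := by
        exact_mod_cast hup x y
      constructor <;> linarith

end GirthL1

/-- There exist an integer `k ≥ 3` and a constant `D < ∞` such that for every `n` there is
a finite connected `k`-regular simple graph `G` with `girth(G) ≥ n` and `c₁(G) ≤ D`. -/
theorem exists_regular_graphs_large_girth_bounded_l1_distortion :
    ∃ k : ℕ, 3 ≤ k ∧ ∃ D : ℝ, ∀ n : ℕ,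
      ∃ (V : Type) (_ : Fintype V) (G : SimpleGraph V),
        G.Connected ∧ G.IsRegularOfDegree k ∧ (n : ℕ∞) ≤ G.egirth ∧
          l1Distortion G ≤ D := by
  refine ⟨3, le_rfl, 3, fun n => ?_⟩
  obtain ⟨V, i, G, h1, h2, h3, h4⟩ := GirthL1.main_aux n
  refine ⟨V, i, G, h1, ?_, h3, h4⟩
  intro v
  rw [← h2 v, Set.ncard_eq_toFinset_card', Set.toFinset_card, card_neighborSet_eq_degree]

end
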